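/- Let k ≥ 1, let j : Fin k → Fin m be injective, i : Fin k → Fin n, and let q : Fin n; write J for the event ⋂_{t : Fin k} {Yp (j t) = i t}. Suppose real numbers are given such that for each t : Fin k, L t ≤ P(⋂_{s ≠ t} {Yp (j s) = i s}) ≤ U t and G t ≤ P(Yp (j t) = i t ∧ Y = q) ≤ H t; for each r : Fin k with i r = q, A r ≤ P((⋂_{s ≠ r} {Yp (j s) = i s}) ∧ X = j r ∧ Y = q) ≤ B r; and for each p : Fin m outside the range of j, C p ≤ P(J ∧ X = p ∧ Y = q) ≤ D p. Then max{ 0, (Σ_t P(Yp (j t) = i t)) + P(Y = q) − k, max_t (L t + G t − 1), Σ_{r : i r = q} A r + Σ_{p ∉ range j} C p } ≤ P(J ∧ Y = q) ≤ min{ min_t P(Yp (j t) = i t), P(Y = q), min_t U t, min_t H t, Σ_{r : i r = q} B r + Σ_{p ∉ range j} D p }. (This is Theorem 7 of the paper, bounding P(y_{i_1}_{x_{j_1}}, …, y_{i_k}_{x_{j_k}}, y_q).) -/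

import Mathlib

open MeasureTheory

/-- Real-valued probability of an event. -/
noncomputable def pr {Ω : Type*} [MeasurableSpace Ω] (P : Measure Ω) (A : Set Ω) : ℝ :=
  (P A).toReal

lemma pr_mono {Ω : Type*} [MeasurableSpace Ω] (P : Measure Ω) [IsProbabilityMeasure P]
    {A B : Set Ω} (h : A ⊆ B) : pr P A ≤ pr P B :=
  measureReal_mono (μ := P) h

lemma pr_inter {Ω : Type*} [MeasurableSpace Ω] (P : Measure Ω) [IsProbabilityMeasure P]
    {A B : Set Ω} (hB : MeasurableSet B) : pr P A + pr P B - 1 ≤ pr P (A ∩ B) := by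
  have h1 : P.real (A ∪ B) + P.real (A ∩ B) = P.real A + P.real B :=
    measureReal_union_add_inter hB
  have h2 : P.real (A ∪ B) ≤ 1 := measureReal_le_one
  change P.real A + P.real B - 1 ≤ P.real (A ∩ B)
  linarith

lemma pr_frechet {Ω ι : Type*} [MeasurableSpace Ω] (P : Measure Ω) [IsProbabilityMeasure P]
    (S : ι → Set Ω) (hS : ∀ t, MeasurableSet (S t)) (s : Finset ι) :
    (∑ t ∈ s, pr P (S t)) - (s.card : ℝ) + 1 ≤ pr P {ω | ∀ t ∈ s, ω ∈ S t} := by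
  classical
  induction s using Finset.induction_on with
  | empty => simp [pr]
  | insert a s ha ih =>
    rw [Finset.sum_insert ha, Finset.card_insert_of_notMem ha]
    have h := pr_inter P (A := {ω | ∀ t ∈ s, ω ∈ S t}) (hS a)
    have e : {ω | ∀ t ∈ s, ω ∈ S t} ∩ S a = {ω | ∀ t ∈ insert a s, ω ∈ S t} := by
      ext ω; simp [and_comm]
    rw [e] at h
    push_cast
    linarith

lemma pr_split {Ω : Type*} [MeasurableSpace Ω] (P : Measure Ω) [IsProbabilityMeasure P]
    {m : ℕ} (X : Ω → Fin m) (hX : Measurable X) (E : Set Ω) (hE : MeasurableSet E) :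
    pr P E = ∑ p, pr P (E ∩ {ω | X ω = p}) := by
  have hm : ∀ p, MeasurableSet (E ∩ {ω | X ω = p}) := fun p =>
    hE.inter (hX (measurableSet_singleton p))
  have h := measureReal_iUnion_fintype (μ := P) (f := fun p => E ∩ {ω | X ω = p})
    (by
      intro a b hab
      refine Set.disjoint_left.2 ?_
      rintro ω ⟨_, h1⟩ ⟨_, h2⟩
      exact hab (h1.symm.trans h2)) hm
  have e : (⋃ p, E ∩ {ω | X ω = p}) = E := by ext ω; simp
  rw [e] at h
  exact h

/-- Theorem 7: bounds for `P(y_{i_1}_{x_{j_1}}, …, y_{i_k}_{x_{j_k}}, y_q)`. -/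
theorem bounds_multi_yq
    {Ω : Type*} [MeasurableSpace Ω] (P : Measure Ω) [IsProbabilityMeasure P]
    {m n : ℕ} (hm : 0 < m) (hn : 0 < n)
    (X : Ω → Fin m) (Y : Ω → Fin n) (Yp : Fin m → Ω → Fin n)
    (hX : Measurable X) (hY : Measurable Y) (hYp : ∀ j, Measurable (Yp j))
    (hconsist : ∀ ω, Y ω = Yp (X ω) ω)
    {k : ℕ} (hk : 1 ≤ k) (j : Fin k → Fin m) (hj : Function.Injective j)
    (i : Fin k → Fin n) (q : Fin n)
    (L U G H A B : Fin k → ℝ) (C D : Fin m → ℝ)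
    (hL : ∀ t, L t ≤ pr P {ω | ∀ s, s ≠ t → Yp (j s) ω = i s})
    (hU : ∀ t, pr P {ω | ∀ s, s ≠ t → Yp (j s) ω = i s} ≤ U t)
    (hG : ∀ t, G t ≤ pr P {ω | Yp (j t) ω = i t ∧ Y ω = q})
    (hH : ∀ t, pr P {ω | Yp (j t) ω = i t ∧ Y ω = q} ≤ H t)
    (hA : ∀ r, i r = q →
      A r ≤ pr P {ω | (∀ s, s ≠ r → Yp (j s) ω = i s) ∧ X ω = j r ∧ Y ω = q})
    (hB : ∀ r, i r = q →
      pr P {ω | (∀ s, s ≠ r → Yp (j s) ω = i s) ∧ X ω = j r ∧ Y ω = q} ≤ B r)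
    (hC : ∀ p, p ∉ Set.range j →
      C p ≤ pr P {ω | (∀ t, Yp (j t) ω = i t) ∧ X ω = p ∧ Y ω = q})
    (hD : ∀ p, p ∉ Set.range j →
      pr P {ω | (∀ t, Yp (j t) ω = i t) ∧ X ω = p ∧ Y ω = q} ≤ D p) :
    max (max 0 ((∑ t, pr P {ω | Yp (j t) ω = i t}) + pr P {ω | Y ω = q} - (k : ℝ)))
        (max (⨆ t, (L t + G t - 1))
             ((∑ r ∈ Finset.univ.filter (fun r => i r = q), A r)
               + ∑ p ∈ Finset.univ.filter (fun p => ∀ t, j t ≠ p), C p))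
      ≤ pr P {ω | (∀ t, Yp (j t) ω = i t) ∧ Y ω = q} ∧
    pr P {ω | (∀ t, Yp (j t) ω = i t) ∧ Y ω = q}
      ≤ min (min (⨅ t, pr P {ω | Yp (j t) ω = i t}) (pr P {ω | Y ω = q}))
            (min (min (⨅ t, U t) (⨅ t, H t))
                 ((∑ r ∈ Finset.univ.filter (fun r => i r = q), B r)
                   + ∑ p ∈ Finset.univ.filter (fun p => ∀ t, j t ≠ p), D p)) := by
  classical
  haveI : Nonempty (Fin k) := ⟨⟨0, hk⟩⟩
  have mY : MeasurableSet {ω | Y ω = q} := hY (measurableSet_singleton q)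
  have mS : ∀ t, MeasurableSet {ω | Yp (j t) ω = i t} := fun t =>
    hYp (j t) (measurableSet_singleton (i t))
  have mJ : MeasurableSet {ω | ∀ t, Yp (j t) ω = i t} := by
    rw [Set.setOf_forall]; exact MeasurableSet.iInter mS
  have key : pr P {ω | (∀ t, Yp (j t) ω = i t) ∧ Y ω = q} =
      (∑ r ∈ Finset.univ.filter (fun r => i r = q),
        pr P {ω | (∀ s, s ≠ r → Yp (j s) ω = i s) ∧ X ω = j r ∧ Y ω = q})
      + ∑ p ∈ Finset.univ.filter (fun p => ∀ t, j t ≠ p),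
        pr P {ω | (∀ t, Yp (j t) ω = i t) ∧ X ω = p ∧ Y ω = q} := by
    have h0 := pr_split P X hX {ω | (∀ t, Yp (j t) ω = i t) ∧ Y ω = q} (mJ.inter mY)
    have e : ∀ p, {ω | (∀ t, Yp (j t) ω = i t) ∧ Y ω = q} ∩ {ω | X ω = p} =
        {ω | (∀ t, Yp (j t) ω = i t) ∧ X ω = p ∧ Y ω = q} := by
      intro p; ext ω; simp only [Set.mem_inter_iff, Set.mem_setOf_eq]; tauto
    simp only [e] at h0
    rw [h0, ← Finset.sum_filter_not_add_sum_filter Finset.univ (fun p => ∀ t, j t ≠ p)]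
    congr 1
    have im : Finset.univ.filter (fun p => ¬ ∀ t, j t ≠ p) = Finset.univ.image j := by
      ext p; simp
    rw [im, Finset.sum_image (fun a _ b _ h => hj h), Finset.sum_filter]
    refine Finset.sum_congr rfl fun r _ => ?_
    split_ifs with hr
    · congr 1
      ext ω
      simp only [Set.mem_setOf_eq]
      constructor
      · rintro ⟨h1, h2, h3⟩
        exact ⟨fun s _ => h1 s, h2, h3⟩
      · rintro ⟨h1, h2, h3⟩
        refine ⟨fun s => ?_, h2, h3⟩
        by_cases hs : s = r
        · subst hs
          rw [← h2, ← hconsist, h3, hr]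
        · exact h1 s hs
    · have : {ω | (∀ t, Yp (j t) ω = i t) ∧ X ω = j r ∧ Y ω = q} = ∅ := by
        ext ω
        simp only [Set.mem_setOf_eq, Set.mem_empty_iff_false, iff_false]
        rintro ⟨h1, h2, h3⟩
        apply hr
        rw [← h1 r, ← h2, ← hconsist, h3]
      rw [this]; simp [pr]
  have nr : ∀ p, p ∈ Finset.univ.filter (fun p => ∀ t, j t ≠ p) → p ∉ Set.range j := by
    intro p hp ⟨t, ht⟩
    exact (Finset.mem_filter.1 hp).2 t ht
  refine ⟨max_le (max_le ENNReal.toReal_nonneg ?_) (max_le (ciSup_le fun t => ?_) ?_),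
    le_min (le_min (le_ciInf fun t => ?_) ?_)
      (le_min (le_min (le_ciInf fun t => ?_) (le_ciInf fun t => ?_)) ?_)⟩
  · have h1 := pr_frechet P (fun t => {ω | Yp (j t) ω = i t}) mS Finset.univ
    have h2 := pr_inter P (A := {ω | ∀ t, Yp (j t) ω = i t}) mY
    simp only [Finset.mem_univ, true_imp_iff, Set.mem_setOf_eq, Finset.card_univ,
      Fintype.card_fin] at h1
    have h3 : pr P ({ω | ∀ t, Yp (j t) ω = i t} ∩ {ω | Y ω = q}) =
      pr P {ω | (∀ t, Yp (j t) ω = i t) ∧ Y ω = q} := rfl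
    linarith
  · have h2 := pr_inter P (A := {ω | ∀ s, s ≠ t → Yp (j s) ω = i s})
      (B := {ω | Yp (j t) ω = i t ∧ Y ω = q}) ((mS t).inter mY)
    refine le_trans ?_ (h2.trans (pr_mono P ?_))
    · linarith [hL t, hG t]
    · rintro ω ⟨h1, h3, h4⟩
      refine ⟨fun s => ?_, h4⟩
      by_cases hs : s = t
      · subst hs; exact h3
      · exact h1 s hs
  · rw [key]
    exact add_le_add (Finset.sum_le_sum fun r hr => hA r (Finset.mem_filter.1 hr).2)
      (Finset.sum_le_sum fun p hp => hC p (nr p hp))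
  · exact pr_mono P fun ω h => h.1 t
  · exact pr_mono P fun ω h => h.2
  · exact le_trans (pr_mono P (by rintro ω ⟨h1, _⟩ s _; exact h1 s)) (hU t)
  · exact le_trans (pr_mono P (by rintro ω ⟨h1, h2⟩; exact ⟨h1 t, h2⟩)) (hH t)
  · rw [key]
    exact add_le_add (Finset.sum_le_sum fun r hr => hB r (Finset.mem_filter.1 hr).2)
      (Finset.sum_le_sum fun p hp => hD p (nr p hp))
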